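/- arXiv:2109.14497 — 2 statements merged into one kernel-verified Lean document; each statement's English description precedes it below -/
import Mathlib

section
/- (Observation 1) For every 1 ≤ i ≤ n, the wrapping length y_i equals x_i − x_h, where h is the largest index with 0 ≤ h < i and x_h + y_h ≤ x_i; equivalently, y_i = x_i − max{ x_h : 0 ≤ h < i, x_h + y_h ≤ x_i }. -/
/-- `pSum L i` is `x_i`: the sum of the first `i` elements of `L` (so `pSum L 0 = 0`). -/
def pSum (L : List ℝ) (i : ℕ) : ℝ := (L.take i).sum

/-- A valid partition of `L`: a partition of `L` into nonempty consecutive blocks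
whose totals are non-decreasing from left to right. -/
def ValidPartition (L : List ℝ) (P : List (List ℝ)) : Prop :=
  P.flatten = L ∧ (∀ B ∈ P, B ≠ []) ∧ List.Chain' (· ≤ ·) (P.map List.sum)

/-- The total of the last block of a partition (`0` for the empty partition). -/
def lastTotal (P : List (List ℝ)) : ℝ := (P.map List.sum).getLastD 0

/-- `wrapLen L` is the wrapping length `y_{|L|}`: the minimum, over all valid
partitions of `L`, of the total of the last block (with `wrapLen [] = 0`,
realized by the empty partition). -/
noncomputable def wrapLen (L : List ℝ) : ℝ :=
  sInf {t | ∃ P, ValidPartition L P ∧ lastTotal P = t}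

theorem aux_valid_snoc (A B : List ℝ) (Q : List (List ℝ)) (hB : B ≠ [])
    (hQ : ValidPartition A Q) (h : lastTotal Q ≤ B.sum) :
    ValidPartition (A ++ B) (Q ++ [B]) := by
  obtain ⟨h1, h2, h3⟩ := hQ
  refine ⟨by simp [h1], ?_, ?_⟩
  · intro C hC
    rcases List.mem_append.1 hC with hC | hC
    · exact h2 C hC
    · rw [List.mem_singleton.1 hC]; exact hB
  · rw [List.map_append]
    refine List.isChain_append.2 ⟨h3, by simp, ?_⟩
    intro x hx y hy
    simp at hy
    subst hy
    unfold lastTotal at h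
    rw [List.getLastD_eq_getLast?, Option.mem_def.1 hx] at h
    simpa using h

theorem aux_last_snoc (Q : List (List ℝ)) (B : List ℝ) : lastTotal (Q ++ [B]) = B.sum := by
  simp [lastTotal, List.getLastD_eq_getLast?]

theorem aux_unsnoc (A B : List ℝ) (Q : List (List ℝ)) (hnn : ∀ b ∈ B, 0 < b)
    (h : ValidPartition A (Q ++ [B])) :
    ValidPartition Q.flatten Q ∧ B ≠ [] ∧ A = Q.flatten ++ B ∧ lastTotal Q ≤ B.sum := by
  obtain ⟨h1, h2, h3⟩ := h
  rw [List.map_append] at h3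
  obtain ⟨h4, -, h5⟩ := List.isChain_append.1 h3
  refine ⟨⟨rfl, fun C hC => h2 C (by simp [hC]), h4⟩, h2 B (by simp), by simp [← h1], ?_⟩
  unfold lastTotal
  rw [List.getLastD_eq_getLast?]
  rcases hx : (Q.map List.sum).getLast? with _ | x
  · simpa using List.sum_nonneg fun b hb => (hnn b hb).le
  · simpa using h5 x hx B.sum (by simp)

theorem aux_pSum_mono (L : List ℝ) (hL : ∀ l ∈ L, 0 < l) {a b : ℕ} (hab : a ≤ b) :
    pSum L a ≤ pSum L b := by
  obtain ⟨c, rfl⟩ := Nat.exists_eq_add_of_le hab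
  unfold pSum
  rw [List.take_add, List.sum_append]
  have : 0 ≤ ((L.drop a).take c).sum := List.sum_nonneg fun b hb =>
    (hL b (List.mem_of_mem_drop (List.mem_of_mem_take hb))).le
  linarith

theorem aux_nil : IsLeast {t | ∃ P, ValidPartition [] P ∧ lastTotal P = t} 0 := by
  constructor
  · exact ⟨[], ⟨rfl, by simp, List.isChain_nil⟩, by simp [lastTotal]⟩
  · rintro t ⟨P, ⟨h1, h2, -⟩, rfl⟩
    rcases P with _ | ⟨B, P⟩
    · simp [lastTotal]
    · simp at h1
      exact absurd h1.1 (h2 B (by simp))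

theorem aux_step (L : List ℝ) (hL : ∀ l ∈ L, 0 < l) (i : ℕ) (hi1 : 1 ≤ i)
    (hin : i ≤ L.length)
    (ih : ∀ j < i, IsLeast {t | ∃ P, ValidPartition (L.take j) P ∧ lastTotal P = t}
      (wrapLen (L.take j))) :
    ∃ h, h < i ∧ pSum L h + wrapLen (L.take h) ≤ pSum L i ∧
      (∀ h', h' < i → pSum L h' + wrapLen (L.take h') ≤ pSum L i → h' ≤ h) ∧
      IsLeast {t | ∃ P, ValidPartition (L.take i) P ∧ lastTotal P = t}
        (pSum L i - pSum L h) := by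
  classical
  let S := (Finset.range i).filter fun h => pSum L h + wrapLen (L.take h) ≤ pSum L i
  have hne : S.Nonempty := by
    refine ⟨0, ?_⟩
    have h0 : wrapLen [] = 0 := aux_nil.csInf_eq
    have h1 := aux_pSum_mono L hL (Nat.zero_le i)
    simp only [S, Finset.mem_filter, Finset.mem_range, List.take_zero, h0]
    exact ⟨hi1, by linarith⟩
  obtain ⟨hlt, hle⟩ := Finset.mem_filter.1 (S.max'_mem hne)
  rw [Finset.mem_range] at hlt
  have hmax : ∀ h', h' < i → pSum L h' + wrapLen (L.take h') ≤ pSum L i → h' ≤ S.max' hne :=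
    fun h' a b => S.le_max' h' (by simp [S, a, b])
  generalize S.max' hne = h at *
  refine ⟨h, hlt, hle, hmax, ?_, ?_⟩
  · obtain ⟨P, hP, hPl⟩ := (ih h hlt).1
    obtain ⟨c, rfl⟩ := Nat.exists_eq_add_of_le hlt.le
    have hs : pSum L (h + c) = pSum L h + ((L.drop h).take c).sum := by
      unfold pSum
      rw [List.take_add, List.sum_append]
    refine ⟨P ++ [(L.drop h).take c], ?_, by rw [aux_last_snoc, hs]; ring⟩
    rw [List.take_add]
    refine aux_valid_snoc _ _ _ ?_ hP (by linarith)
    intro h0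
    have := congrArg List.length h0
    simp at this
    omega
  · rintro t ⟨P, hP, rfl⟩
    rcases List.eq_nil_or_concat P with rfl | ⟨Q, B, rfl⟩
    · have := congrArg List.length hP.1
      simp at this
      omega
    · rw [List.concat_eq_append] at hP ⊢
      have hB : ∀ b ∈ B, 0 < b := by
        intro b hb
        apply hL b
        apply List.mem_of_mem_take (i := i)
        rw [← hP.1]
        simp [hb]
      obtain ⟨hQ, hBn, hA, hl⟩ := aux_unsnoc _ _ _ hB hP
      rw [aux_last_snoc]
      have hlen : i = Q.flatten.length + B.length := by
        rw [← List.length_append, ← hA, List.length_take]; omega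
      have hBl := List.length_pos_iff.2 hBn
      have hj : Q.flatten.length < i := by omega
      have htake : L.take Q.flatten.length = Q.flatten := by
        have h1 := congrArg (List.take Q.flatten.length) hA
        rw [List.take_take, min_eq_left hj.le, List.take_left] at h1
        exact h1
      generalize Q.flatten.length = j at *
      have hsum : pSum L i = pSum L j + B.sum := by
        unfold pSum
        rw [hA, htake, List.sum_append]
      have hy : wrapLen (L.take j) ≤ lastTotal Q := (ih j hj).2 ⟨Q, by rw [htake]; exact hQ, rfl⟩
      have := aux_pSum_mono L hL (hmax j hj (by linarith))
      linarith

theorem aux_least (L : List ℝ) (hL : ∀ l ∈ L, 0 < l) (i : ℕ) (hin : i ≤ L.length) :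
    IsLeast {t | ∃ P, ValidPartition (L.take i) P ∧ lastTotal P = t} (wrapLen (L.take i)) := by
  induction i using Nat.strong_induction_on with
  | _ i ih =>
    rcases Nat.eq_zero_or_pos i with rfl | hi
    · have h0 : wrapLen [] = 0 := aux_nil.csInf_eq
      rw [List.take_zero, h0]
      exact aux_nil
    · obtain ⟨h, -, -, -, hm⟩ := aux_step L hL i hi hin fun j hj => ih j hj (by omega)
      have : wrapLen (L.take i) = _ := hm.csInf_eq
      rw [this]
      exact hm

/-- Observation 1: For every `1 ≤ i ≤ n`, the wrapping length `y_i`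
equals `x_i − x_h`, where `h` is the largest index with `0 ≤ h < i` and
`x_h + y_h ≤ x_i`. -/
theorem stmt_3 (L : List ℝ) (hL : ∀ l ∈ L, 0 < l) (i : ℕ) (hi1 : 1 ≤ i)
    (hin : i ≤ L.length) :
    ∃ h, h < i ∧ pSum L h + wrapLen (L.take h) ≤ pSum L i ∧
      (∀ h', h' < i → pSum L h' + wrapLen (L.take h') ≤ pSum L i → h' ≤ h) ∧
      wrapLen (L.take i) = pSum L i - pSum L h := by
  obtain ⟨h, h1, h2, h3, hm⟩ := aux_step L hL i hi1 hin
    fun j hj => aux_least L hL j (by omega)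
  exact ⟨h, h1, h2, h3, hm.csInf_eq⟩
end

section
/- (Left-discarding lemma) If 0 ≤ g < h < i ≤ n and x_h + y_h ≤ x_i, then for every i' with i ≤ i' ≤ n one has y_{i'} ≤ x_{i'} − x_h < x_{i'} − x_g; in particular, the index g is never the maximizer in the recurrence y_{i'} = x_{i'} − max{ x_j : j < i', x_j + y_j ≤ x_{i'} } for any i' ≥ i. -/
theorem wl_finite (L : List ℝ) : {t | ∃ P, ValidPartition L P ∧ lastTotal P = t}.Finite := by
  apply Set.Finite.subset (List.finite_toSet (L.tails.map List.sum))
  rintro t ⟨P, ⟨hf, -, -⟩, rfl⟩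
  simp only [Set.mem_setOf_eq, List.mem_map, List.mem_tails]
  rcases List.eq_nil_or_concat P with rfl | ⟨Q, B, rfl⟩
  · exact ⟨[], List.nil_suffix, by simp [lastTotal]⟩
  · refine ⟨B, ⟨Q.flatten, by simpa using hf⟩, ?_⟩
    simp [lastTotal]

theorem wl_nonempty (L : List ℝ) : {t | ∃ P, ValidPartition L P ∧ lastTotal P = t}.Nonempty := by
  by_cases h : L = []
  · subst h
    exact ⟨_, [], ⟨by simp, by simp, List.IsChain.nil⟩, rfl⟩
  · exact ⟨_, [L], ⟨by simp, by simpa using h, List.IsChain.singleton _⟩, rfl⟩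

theorem pSum_split (L : List ℝ) (a b : ℕ) (hab : a ≤ b) :
    pSum L b = pSum L a + ((L.take b).drop a).sum := by
  unfold pSum
  rw [← List.sum_append]
  congr 1
  conv_lhs => rw [← List.take_append_drop a (L.take b)]
  rw [List.take_take, min_eq_left hab]

theorem seg_nonneg (L : List ℝ) (hL : ∀ l ∈ L, 0 < l) (a b : ℕ) :
    0 ≤ ((L.take b).drop a).sum :=
  List.sum_nonneg fun x hx => (hL x (List.mem_of_mem_take (List.mem_of_mem_drop hx))).le

/-- Left-discarding lemma: If `0 ≤ g < h < i ≤ n` and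
`x_h + y_h ≤ x_i`, then for every `i'` with `i ≤ i' ≤ n` one has
`y_{i'} ≤ x_{i'} − x_h < x_{i'} − x_g`; so the index `g` is never the maximizer
in the recurrence for any `i' ≥ i`. -/
theorem stmt_4 (L : List ℝ) (hL : ∀ l ∈ L, 0 < l) (g h i : ℕ) (hgh : g < h)
    (hhi : h < i) (hin : i ≤ L.length)
    (hfold : pSum L h + wrapLen (L.take h) ≤ pSum L i) :
    ∀ i', i ≤ i' → i' ≤ L.length →
      wrapLen (L.take i') ≤ pSum L i' - pSum L h ∧
      pSum L i' - pSum L h < pSum L i' - pSum L g := by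
  intro i' hi hn
  have h1 := pSum_split L h i' (by omega)
  have h2 := pSum_split L i i' hi
  have h3 := seg_nonneg L hL i i'
  have h4 := pSum_split L g h hgh.le
  constructor
  · obtain ⟨P, ⟨hf, hne, hc⟩, hP⟩ := (wl_nonempty (L.take h)).csInf_mem (wl_finite (L.take h))
    change lastTotal P = wrapLen (L.take h) at hP
    refine csInf_le (wl_finite _).bddBelow ⟨P ++ [(L.take i').drop h], ⟨?_, ?_, ?_⟩, ?_⟩
    · conv_rhs => rw [← List.take_append_drop h (L.take i')]
      rw [List.take_take, min_eq_left (by omega)]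
      simp [hf]
    · intro B hB
      rcases List.mem_append.1 hB with hB | hB
      · exact hne B hB
      · rw [List.mem_singleton.1 hB]
        intro h0
        have := congrArg List.length h0
        simp at this
        omega
    · rw [List.map_append]
      refine List.IsChain.append hc (by simp) ?_
      intro x hx y hy
      simp at hy
      subst hy
      have : lastTotal P = x := by
        unfold lastTotal
        rw [List.getLastD_eq_getLast?, Option.mem_def.1 hx]
        rfl
      linarith
    · simp [lastTotal]
      linarith
  · have : 0 < ((L.take h).drop g).sum := by
      apply List.sum_pos
      · exact fun x hx => hL x (List.mem_of_mem_take (List.mem_of_mem_drop hx))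
      · intro h0
        have := congrArg List.length h0
        simp at this
        omega
    linarith
end
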